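/- arXiv:1804.01357 — 2 statements merged into one kernel-verified Lean document; each statement's English description precedes it below -/
import Mathlib

section
/- If k_0 + k_1 < 0 and a(k_0 − k_1) ≥ 0, then f is strictly increasing on (0,∞). (Hence in this case the Stackelberg leader's risk is minimized in the limit d → 0, i.e., d* = 0 and the equilibrium is non-informative.) -/
/-- The standard Gaussian tail function `Q(x) = ∫_x^∞ (1/√(2π)) e^{-t²/2} dt`. -/
noncomputable def Q (x : ℝ) : ℝ :=
  ∫ t in Set.Ioi x, (1 / Real.sqrt (2 * Real.pi)) * Real.exp (-t ^ 2 / 2)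

/-- The transmitter's (normalized) Bayes risk as a function of the normalized signal
separation `d`, when the receiver applies the likelihood-ratio test with threshold
`τ = eᵃ`: `f(d) = k₀ e^{a/2} Q(a/d + d/2) + k₁ e^{-a/2} Q(d/2 - a/d)`. -/
noncomputable def f (a k0 k1 d : ℝ) : ℝ :=
  k0 * Real.exp (a / 2) * Q (a / d + d / 2) + k1 * Real.exp (-(a / 2)) * Q (d / 2 - a / d)

theorem Q_deriv (x : ℝ) :
    HasDerivAt Q (-((1 / Real.sqrt (2 * Real.pi)) * Real.exp (-x ^ 2 / 2))) x := by
  set g : ℝ → ℝ := fun t => (1 / Real.sqrt (2 * Real.pi)) * Real.exp (-t ^ 2 / 2) with hg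
  have hc : Continuous g := by fun_prop
  have hi : MeasureTheory.Integrable g := by
    have h := (integrable_exp_neg_mul_sq (b := 1 / 2) (by norm_num)).const_mul
      (1 / Real.sqrt (2 * Real.pi))
    refine h.congr (Filter.Eventually.of_forall fun t => ?_)
    simp only [hg]
    congr 2
    ring
  have hQ : Q = fun y => Q 0 - ∫ t in (0:ℝ)..y, g t := by
    funext y
    have := intervalIntegral.integral_interval_add_Ioi (a := 0) (b := y) (f := g)
      hi.integrableOn hi.integrableOn
    simp only [Q]
    simp only [hg] at this ⊢
    linarith
  rw [hQ]
  have h := intervalIntegral.integral_hasDerivAt_right (a := 0) (b := x) (f := g)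
    (hc.intervalIntegrable _ _) (hc.stronglyMeasurableAtFilter _ _) hc.continuousAt
  exact h.const_sub (Q 0)

theorem f_deriv (a k0 k1 d : ℝ) (hd : 0 < d) :
    HasDerivAt (f a k0 k1) ((1 / Real.sqrt (2 * Real.pi)) *
      Real.exp (-(a ^ 2 / d ^ 2) / 2 - d ^ 2 / 8) *
        (a * (k0 - k1) / d ^ 2 - (k0 + k1) / 2)) d := by
  have hd' : d ≠ 0 := hd.ne'
  have h1 : HasDerivAt (fun d : ℝ => a / d) (-(a / d ^ 2)) d := by
    have := (hasDerivAt_inv hd').const_mul a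
    simpa [div_eq_mul_inv] using this
  have h2 : HasDerivAt (fun d : ℝ => d / 2) (1 / 2) d := (hasDerivAt_id d).div_const 2
  have h3 := ((Q_deriv (a / d + d / 2)).comp d (h1.add h2)).const_mul (k0 * Real.exp (a / 2))
  have h4 := ((Q_deriv (d / 2 - a / d)).comp d (h2.sub h1)).const_mul (k1 * Real.exp (-(a / 2)))
  have e1 : Real.exp (-(a / d + d / 2) ^ 2 / 2) =
      Real.exp (-(a ^ 2 / d ^ 2) / 2 - d ^ 2 / 8) * Real.exp (-(a / 2)) := by
    rw [← Real.exp_add]; congr 1; field_simp; ring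
  have e2 : Real.exp (-(d / 2 - a / d) ^ 2 / 2) =
      Real.exp (-(a ^ 2 / d ^ 2) / 2 - d ^ 2 / 8) * Real.exp (a / 2) := by
    rw [← Real.exp_add]; congr 1; field_simp; ring
  have e3 : Real.exp (a / 2) * Real.exp (-(a / 2)) = 1 := by
    rw [← Real.exp_add]; simp
  refine (h3.add h4).congr_deriv ?_
  rw [e1, e2]
  generalize Real.exp (-(a ^ 2 / d ^ 2) / 2 - d ^ 2 / 8) = E
  generalize 1 / Real.sqrt (2 * Real.pi) = c
  linear_combination (-c * E * (k0 * (1 / 2 - a / d ^ 2) + k1 * (1 / 2 + a / d ^ 2))) * e3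

/-- If `k₀ + k₁ < 0` and `a(k₀ - k₁) ≥ 0`, then `f` is strictly increasing on `(0, ∞)`. -/
theorem stmt_9 (a k0 k1 : ℝ) (hsum : k0 + k1 < 0) (hdiff : 0 ≤ a * (k0 - k1)) :
    StrictMonoOn (f a k0 k1) (Set.Ioi 0) := by
  apply strictMonoOn_of_deriv_pos (convex_Ioi 0)
  · intro d hd
    exact (f_deriv a k0 k1 d hd).continuousAt.continuousWithinAt
  · intro d hd
    rw [interior_Ioi] at hd
    rw [(f_deriv a k0 k1 d hd).deriv]
    have : 0 ≤ a * (k0 - k1) / d ^ 2 := by positivity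
    have h2 : 0 < a * (k0 - k1) / d ^ 2 - (k0 + k1) / 2 := by linarith
    have h3 : 0 < Real.sqrt (2 * Real.pi) := by positivity
    positivity
end

section
/- Suppose σ > 0, P_0 > 0, P_1 > 0, the transmitter and receiver share identical cost parameters C_{10} > C_{00} and C_{01} > C_{11}, but have (possibly different) subjective priors π_0^t, π_0^r ∈ (0,1). Let S_0* = −√P_0, S_1* = √P_1, τ = π_0^r(C_{10} − C_{00})/(π_1^r(C_{01} − C_{11})), and η* = (S_0* + S_1*)/2 + σ² ln(τ)/(S_1* − S_0*). Then the pair ((S_0*, S_1*), [η*, ∞)) is a Nash equilibrium of the binary Gaussian signaling game, and it is informative; i.e., as long as the priors are mutually absolutely continuous, subjectivity in the priors does not destroy the informative Nash equilibrium. -/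
/-- Gaussian density with standard deviation `σ` (centered at 0). -/
noncomputable def gauss (σ y : ℝ) : ℝ :=
  (1 / (σ * Real.sqrt (2 * Real.pi))) * Real.exp (-y ^ 2 / (2 * σ ^ 2))

/-- Bayes risk of a player with prior `π₀` (and `π₁ = 1 - π₀`) and costs `Cⱼᵢ`
(cost of deciding `Hⱼ` when `Hᵢ` is true), when the signal levels are `S₀, S₁` and
the receiver decides `H₁` iff the observation lies in `Γ₁`. -/
noncomputable def bayesRisk (σ S0 S1 π0 C00 C01 C10 C11 : ℝ) (Γ1 : Set ℝ) : ℝ :=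
  π0 * (C00 * (∫ y in Γ1ᶜ, gauss σ (y - S0)) + C10 * (∫ y in Γ1, gauss σ (y - S0)))
    + (1 - π0) * (C01 * (∫ y in Γ1ᶜ, gauss σ (y - S1)) + C11 * (∫ y in Γ1, gauss σ (y - S1)))

theorem gauss_nonneg {σ : ℝ} (hσ : 0 < σ) (y : ℝ) : 0 ≤ gauss σ y := by
  unfold gauss; positivity

theorem gauss_integrable {σ : ℝ} (hσ : 0 < σ) (s : ℝ) :
    MeasureTheory.Integrable (fun y => gauss σ (y - s)) := by
  have h : MeasureTheory.Integrable (fun y => gauss σ y) := by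
    have h0 := (integrable_exp_neg_mul_sq (b := 1 / (2 * σ ^ 2)) (by positivity)).const_mul
      (1 / (σ * Real.sqrt (2 * Real.pi)))
    refine h0.congr (Filter.Eventually.of_forall fun y => ?_)
    simp only [gauss]
    congr 2
    ring
  exact h.comp_sub_right s

theorem risk_eq {σ : ℝ} (hσ : 0 < σ) (S0 S1 p C00 C01 C10 C11 : ℝ) (G : Set ℝ)
    (hG : MeasurableSet G) :
    bayesRisk σ S0 S1 p C00 C01 C10 C11 G =
      (p * C00 + (1 - p) * C01) * (∫ y, gauss σ y)
      + (p * (C10 - C00) * (∫ y in G, gauss σ (y - S0))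
        - (1 - p) * (C01 - C11) * (∫ y in G, gauss σ (y - S1))) := by
  have h : ∀ s, (∫ y in Gᶜ, gauss σ (y - s)) =
      (∫ y, gauss σ y) - ∫ y in G, gauss σ (y - s) := by
    intro s
    have h1 := MeasureTheory.integral_add_compl hG (gauss_integrable hσ s)
    have h2 := MeasureTheory.integral_sub_right_eq_self (μ := MeasureTheory.volume) (gauss σ) s
    linarith
  rw [bayesRisk, h, h]
  ring

theorem tail_mono {σ : ℝ} (hσ : 0 < σ) (η : ℝ) {s t : ℝ} (hst : s ≤ t) :
    (∫ y in Set.Ici η, gauss σ (y - s)) ≤ ∫ y in Set.Ici η, gauss σ (y - t) := by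
  have h : ∀ s, (∫ y in Set.Ici η, gauss σ (y - s)) = ∫ y in Set.Ici (η - s), gauss σ y := by
    intro s
    rw [← MeasureTheory.integral_indicator measurableSet_Ici,
      ← MeasureTheory.integral_indicator measurableSet_Ici,
      ← MeasureTheory.integral_sub_right_eq_self (Set.indicator (Set.Ici (η - s)) _) s]
    congr 1
    ext y
    simp [Set.indicator]
  rw [h, h]
  apply MeasureTheory.setIntegral_mono_set
  · have := gauss_integrable hσ 0
    simp only [sub_zero] at this
    exact this.integrableOn
  · exact Filter.Eventually.of_forall fun y => gauss_nonneg hσ y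
  · exact (Set.Ici_subset_Ici.2 (by linarith)).eventuallyLE

theorem key {σ a b S0 S1 : ℝ} (hσ : 0 < σ) (ha : 0 < a) (hb : 0 < b) (hS : S0 < S1) (y : ℝ) :
    a * gauss σ (y - S0) ≤ b * gauss σ (y - S1) ↔
      (S0 + S1) / 2 + σ ^ 2 * Real.log (a / b) / (S1 - S0) ≤ y := by
  have hk : 0 < 1 / (σ * Real.sqrt (2 * Real.pi)) := by positivity
  have hd : 0 < S1 - S0 := by linarith
  have e : a * gauss σ (y - S0) ≤ b * gauss σ (y - S1) ↔
      Real.exp (Real.log a + -(y - S0) ^ 2 / (2 * σ ^ 2)) ≤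
        Real.exp (Real.log b + -(y - S1) ^ 2 / (2 * σ ^ 2)) := by
    rw [Real.exp_add, Real.exp_add, Real.exp_log ha, Real.exp_log hb, gauss, gauss,
      mul_left_comm a, mul_left_comm b]
    exact mul_le_mul_iff_right₀ hk
  rw [e, Real.exp_le_exp, Real.log_div ha.ne' hb.ne', ← sub_nonneg, ← sub_nonneg (b := _ + _ / _)]
  have e2 : Real.log b + -(y - S1) ^ 2 / (2 * σ ^ 2) - (Real.log a + -(y - S0) ^ 2 / (2 * σ ^ 2))
      = ((S1 - S0) / σ ^ 2) *
        (y - ((S0 + S1) / 2 + σ ^ 2 * (Real.log a - Real.log b) / (S1 - S0))) := by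
    field_simp
    ring
  rw [e2]
  exact mul_nonneg_iff_of_pos_left (by positivity)

/-- Subjective-priors case: transmitter and receiver share the costs
`C₁₀ > C₀₀`, `C₀₁ > C₁₁` but may have different priors `π₀ᵗ, π₀ʳ ∈ (0,1)`. Then
`((-√P₀, √P₁), [η*, ∞))` with `η* = (S₀*+S₁*)/2 + σ² ln τ/(S₁*-S₀*)`,
`τ = π₀ʳ(C₁₀-C₀₀)/(π₁ʳ(C₀₁-C₁₁))`, is an informative Nash equilibrium: subjectivity
in the priors does not destroy the informative Nash equilibrium. -/
theorem stmt_18 (σ P0 P1 π0t π0r C00 C01 C10 C11 : ℝ)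
    (hσ : 0 < σ) (hP0 : 0 < P0) (hP1 : 0 < P1)
    (hπt : π0t ∈ Set.Ioo (0 : ℝ) 1) (hπr : π0r ∈ Set.Ioo (0 : ℝ) 1)
    (h10 : C10 > C00) (h01 : C01 > C11)
    (S0s S1s τ ηs : ℝ)
    (hS0s : S0s = -Real.sqrt P0) (hS1s : S1s = Real.sqrt P1)
    (hτ : τ = π0r * (C10 - C00) / ((1 - π0r) * (C01 - C11)))
    (hηs : ηs = (S0s + S1s) / 2 + σ ^ 2 * Real.log τ / (S1s - S0s)) :
    (∀ S0 S1 : ℝ, S0 ^ 2 ≤ P0 → S1 ^ 2 ≤ P1 →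
        bayesRisk σ S0s S1s π0t C00 C01 C10 C11 (Set.Ici ηs)
          ≤ bayesRisk σ S0 S1 π0t C00 C01 C10 C11 (Set.Ici ηs))
      ∧ (∀ Γ1 : Set ℝ, MeasurableSet Γ1 →
          bayesRisk σ S0s S1s π0r C00 C01 C10 C11 (Set.Ici ηs)
            ≤ bayesRisk σ S0s S1s π0r C00 C01 C10 C11 Γ1)
      ∧ S0s ≠ S1s := by
  have hr0 := Real.sqrt_pos.2 hP0
  have hr1 := Real.sqrt_pos.2 hP1
  have hS : S0s < S1s := by linarith
  obtain ⟨ht0, ht1⟩ := hπt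
  obtain ⟨hp0, hp1⟩ := hπr
  refine ⟨?_, ?_, hS.ne⟩
  · intro S0 S1 h0 h1
    rw [risk_eq hσ _ _ _ _ _ _ _ _ measurableSet_Ici, risk_eq hσ _ _ _ _ _ _ _ _ measurableSet_Ici]
    have i0 : S0s ≤ S0 := by rw [hS0s]; exact (abs_le.1 (Real.abs_le_sqrt h0)).1
    have i1 : S1 ≤ S1s := by rw [hS1s]; exact (abs_le.1 (Real.abs_le_sqrt h1)).2
    have j0 := mul_le_mul_of_nonneg_left (tail_mono hσ ηs i0)
      (mul_nonneg ht0.le (sub_nonneg.2 h10.le))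
    have j1 := mul_le_mul_of_nonneg_left (tail_mono hσ ηs i1)
      (mul_nonneg (sub_nonneg.2 ht1.le) (sub_nonneg.2 h01.le))
    linarith
  · intro G hG
    rw [risk_eq hσ _ _ _ _ _ _ _ _ measurableSet_Ici, risk_eq hσ _ _ _ _ _ _ _ _ hG]
    have ha : 0 < π0r * (C10 - C00) := mul_pos hp0 (sub_pos.2 h10)
    have hb : 0 < (1 - π0r) * (C01 - C11) := mul_pos (sub_pos.2 hp1) (sub_pos.2 h01)
    have hk := key hσ ha hb hS
    rw [← hτ, ← hηs] at hk
    generalize π0r * (C10 - C00) = a at *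
    generalize (1 - π0r) * (C01 - C11) = b at *
    have hi0 := (gauss_integrable hσ S0s).const_mul a
    have hi1 := (gauss_integrable hσ S1s).const_mul b
    have hi := hi0.sub hi1
    have e : ∀ A : Set ℝ, MeasurableSet A →
        a * (∫ y in A, gauss σ (y - S0s)) - b * (∫ y in A, gauss σ (y - S1s)) =
        ∫ y, A.indicator (fun y => a * gauss σ (y - S0s) - b * gauss σ (y - S1s)) y := by
      intro A hA
      rw [MeasureTheory.integral_indicator hA,
        MeasureTheory.integral_sub hi0.integrableOn hi1.integrableOn,
        MeasureTheory.integral_const_mul, MeasureTheory.integral_const_mul]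
    rw [e _ measurableSet_Ici, e _ hG]
    refine add_le_add le_rfl ?_
    apply MeasureTheory.integral_mono (hi.indicator measurableSet_Ici) (hi.indicator hG)
    intro y
    have := hk y
    by_cases hy : ηs ≤ y
    · have h2 := this.2 hy
      by_cases hyG : y ∈ G <;> simp [Set.indicator, hy, hyG] <;> linarith
    · have h2 := not_le.1 (mt this.1 hy)
      by_cases hyG : y ∈ G <;> simp [Set.indicator, hy, hyG] <;> linarith
end
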